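/- (Theorem 5, existence part) Suppose n is odd, λ = 1/2, and p ≥ 1, and write C_p = C^{1/2}_p. Then the bilinear map Z_p : A × A → A defined by Z_p(φ,ψ) = T_p(C_p(S_p φ, S_p ψ)) is bidifferential; equivalently, since T_p and S_p are invertible on A, there is a bidifferential operator Z_p such that C_p(φ,ψ) = T_p^{−1}(Z_p(S_p^{−1}φ, S_p^{−1}ψ)) for all φ, ψ ∈ A. -/

import Mathlib

open MvPolynomial

/-- The polynomial symbol algebra `A = ℂ[u₁,…,uₙ,ξ₁,…,ξₙ]`: variables `Sum.inl i` are the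
`uᵢ` and variables `Sum.inr i` are the `ξᵢ`. -/
abbrev PolA (n : ℕ) := MvPolynomial (Fin n ⊕ Fin n) ℂ

namespace LO

/-- ξ-degree of a monomial exponent. -/
def xiDeg {n : ℕ} (d : (Fin n ⊕ Fin n) →₀ ℕ) : ℕ :=
  ∑ i : Fin n, d (Sum.inr i)

/-- `c(E)`: the operator multiplying the ξ-degree-`m` component by `c m`. -/
noncomputable def cE {n : ℕ} (c : ℕ → ℂ) (φ : PolA n) : PolA n :=
  ∑ d ∈ φ.support, monomial d (c (xiDeg d) * coeff d φ)

/-- `D = Σᵢ ∂²/∂uᵢ∂ξᵢ`. -/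
noncomputable def Dop {n : ℕ} (φ : PolA n) : PolA n :=
  ∑ i : Fin n, pderiv (Sum.inl i) (pderiv (Sum.inr i) φ)

/-- The scalar `h^λ_d(m)`. -/
noncomputable def hScal (n : ℕ) (lam : ℂ) (d m : ℕ) : ℂ :=
  (d.factorial : ℂ)⁻¹ *
    ∏ j ∈ Finset.range d,
      ((m : ℂ) + (j : ℂ) + lam * ((n : ℂ) + 1)) /
        (2 * (m : ℂ) + (j : ℂ) + (n : ℂ) + (d : ℂ))

/-- The scalar `g^λ_d(m)`. -/
noncomputable def gScal (n : ℕ) (lam : ℂ) (d m : ℕ) : ℂ :=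
  (d.factorial : ℂ)⁻¹ *
    ∏ j ∈ Finset.range d,
      (-(m : ℂ) - (j : ℂ) - lam * ((n : ℂ) + 1)) /
        (2 * (m : ℂ) + (j : ℂ) + (n : ℂ) + 1)

/-- `bh^λ_d = h^λ_d(E) ∘ D^d` (equal to the identity for `d = 0`). -/
noncomputable def bh {n : ℕ} (lam : ℂ) (d : ℕ) (φ : PolA n) : PolA n :=
  cE (hScal n lam d) (Dop^[d] φ)

/-- `bg^λ_d = g^λ_d(E) ∘ D^d` (equal to the identity for `d = 0`). -/
noncomputable def bg {n : ℕ} (lam : ℂ) (d : ℕ) (φ : PolA n) : PolA n :=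
  cE (gScal n lam d) (Dop^[d] φ)

/-- `N_k(φ,ψ) = (1/k!) Σ_{α ∈ {1,…,n}^k} ∂^kφ/∂ξ_α · ∂^kψ/∂u_α`. -/
noncomputable def Nop {n : ℕ} (k : ℕ) (φ ψ : PolA n) : PolA n :=
  (k.factorial : ℂ)⁻¹ •
    ∑ α : Fin k → Fin n,
      ((List.ofFn α).foldr (fun i acc => pderiv (Sum.inr i) acc) φ) *
      ((List.ofFn α).foldr (fun i acc => pderiv (Sum.inl i) acc) ψ)

/-- The coefficient `C^λ_p` of the Lecomte–Ovsienko star product. -/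
noncomputable def C (n : ℕ) (lam : ℂ) (p : ℕ) (φ ψ : PolA n) : PolA n :=
  ∑ i ∈ Finset.range (p + 1), ∑ j ∈ Finset.range (p + 1),
    ∑ k ∈ Finset.range (p + 1), ∑ m ∈ Finset.range (p + 1),
      if i + j + k + m = p then bg lam m (Nop k (bh lam i φ) (bh lam j ψ)) else 0

/-- The Poisson bracket `{φ,ψ}`. -/
noncomputable def pb {n : ℕ} (φ ψ : PolA n) : PolA n :=
  ∑ i : Fin n,
    (pderiv (Sum.inr i) φ * pderiv (Sum.inl i) ψ
      - pderiv (Sum.inl i) φ * pderiv (Sum.inr i) ψ)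

/-- `φ ∈ A^m` (ξ-homogeneous of degree `m`; for `m < 0` this forces `φ = 0`). -/
def IsXiHomog {n : ℕ} (m : ℤ) (φ : PolA n) : Prop :=
  ∀ d ∈ φ.support, (xiDeg d : ℤ) = m

/-- The set of spanning momentum functions of the projective `sl_{n+1}(ℝ)`-action. -/
noncomputable def momSet (n : ℕ) : Set (PolA n) :=
  (Set.range fun i : Fin n => (X (Sum.inr i) : PolA n)) ∪
  (Set.range fun ij : Fin n × Fin n =>
    (X (Sum.inl ij.1) * X (Sum.inr ij.2) : PolA n)) ∪
  (Set.range fun i : Fin n =>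
    (X (Sum.inl i) * ∑ k : Fin n, X (Sum.inl k) * X (Sum.inr k) : PolA n))

/-- The span `M` of the momentum functions. -/
noncomputable def momSpan (n : ℕ) : Submodule ℂ (PolA n) := Submodule.span ℂ (momSet n)

/-- The Weyl algebra `W` of differential operators with polynomial coefficients,
as a subalgebra of `End_ℂ(A)`. -/
noncomputable def Weyl (n : ℕ) : Subalgebra ℂ (Module.End ℂ (PolA n)) :=
  Algebra.adjoin ℂ
    ((Set.range fun i : Fin n =>
        (LinearMap.mulLeft ℂ (X (Sum.inl i)) : Module.End ℂ (PolA n))) ∪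
     (Set.range fun i : Fin n =>
        (LinearMap.mulLeft ℂ (X (Sum.inr i)) : Module.End ℂ (PolA n))) ∪
     (Set.range fun v : Fin n ⊕ Fin n =>
        ((pderiv v).toLinearMap : Module.End ℂ (PolA n))))

/-- A bilinear map `B : A × A → A` is bidifferential if it is a finite sum
`B(φ,ψ) = Σ_α A_α(φ)·B_α(ψ)` with `A_α, B_α` in the Weyl algebra. -/
def Bidiff (n : ℕ) (B : PolA n → PolA n → PolA n) : Prop :=
  ∃ (N : ℕ) (Aop Bop : Fin N → Weyl n),
    ∀ φ ψ : PolA n,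
      B φ ψ = ∑ α : Fin N,
        (Aop α : Module.End ℂ (PolA n)) φ * (Bop α : Module.End ℂ (PolA n)) ψ

/-- The scalar by which `T_p = ∏_{i=1}^{⌊p/2⌋}(E'+i)` acts on `A^m`. -/
noncomputable def TScal (n p m : ℕ) : ℂ :=
  ∏ i ∈ Finset.Icc 1 (p / 2), ((m : ℂ) + (n : ℂ) / 2 + (i : ℂ))

/-- The scalar by which `S_p = ∏_{i=1}^{⌊p/2⌋}(E'−i)` acts on `A^m`. -/
noncomputable def SScal (n p m : ℕ) : ℂ :=
  ∏ i ∈ Finset.Icc 1 (p / 2), ((m : ℂ) + (n : ℂ) / 2 - (i : ℂ))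

/-- The operator `T_p`. -/
noncomputable def Tp (n p : ℕ) : PolA n → PolA n := cE (TScal n p)

/-- The operator `S_p`. -/
noncomputable def Sp (n p : ℕ) : PolA n → PolA n := cE (SScal n p)

/-- The fiberwise Euler operator `E = Σ ξᵢ ∂/∂ξᵢ` as an endomorphism. -/
noncomputable def Elin (n : ℕ) : Module.End ℂ (PolA n) :=
  ∑ i : Fin n,
    (LinearMap.mulLeft ℂ (X (Sum.inr i)) : Module.End ℂ (PolA n)) ∘ₗ
      (pderiv (Sum.inr i)).toLinearMap

/-- `E' = E + n/2` as an endomorphism. -/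
noncomputable def E'lin (n : ℕ) : Module.End ℂ (PolA n) :=
  Elin n + ((n : ℂ) / 2) • 1

/-- `D` as an endomorphism. -/
noncomputable def Dlin (n : ℕ) : Module.End ℂ (PolA n) :=
  ∑ i : Fin n,
    ((pderiv (Sum.inl i)).toLinearMap : Module.End ℂ (PolA n)) ∘ₗ
      (pderiv (Sum.inr i)).toLinearMap

/-- `L^{(m)} = −(1/16)(ξ_m∘D − 2E'∘∂/∂u_m)∘D`. -/
noncomputable def Lop (n : ℕ) (m : Fin n) : Module.End ℂ (PolA n) :=
  (-(1 / 16 : ℂ)) •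
    (((LinearMap.mulLeft ℂ (X (Sum.inr m)) : Module.End ℂ (PolA n)) ∘ₗ Dlin n
        - (2 : ℂ) • (E'lin n ∘ₗ (pderiv (Sum.inl m)).toLinearMap)) ∘ₗ Dlin n)

end LO

/-!
`D` lowers the `ξ`-degree by one, so `D^d ∘ c(E) = c(E + d) ∘ D^d`. Hence `T_p ∘ bg_d` and
`bh_d ∘ S_p` are of the form `c(E) ∘ D^d` with `c = T_p(m) g_d(m)` and `c = h_d(m) S_p(m + d)`
respectively, and such an operator lies in the Weyl algebra as soon as `c` is polynomial in `m`.

At `λ = 1/2` both `g_d(m)` and `h_d(m)` are constant multiples of the quotient `(x)_d / (2x)_d` of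
rising factorials, the former at `x = E' + 1/2` and the latter at `x = 1/2 - (E' + d)`. The
duplication formula `(2x)_d = 2^d (x)_⌈d/2⌉ (x + 1/2)_⌊d/2⌋` reduces the denominator of this
quotient to `(x + 1/2)_⌊d/2⌋`, which divides `(x + 1/2)_⌊p/2⌋`, that is, `T_p(m)` in the first
case and `± S_p(m + d)` in the second.
-/

/-! ### Rising factorials -/

section AscPochhammer

theorem ascPochhammer_eval_eq_prod_range {R : Type*} [CommSemiring R] (d : ℕ) (x : R) :
    (ascPochhammer R d).eval x = ∏ j ∈ Finset.range d, (x + j) := by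
  induction d with
  | zero => simp
  | succ d ih => rw [ascPochhammer_succ_eval, ih, Finset.prod_range_succ]

theorem ascPochhammer_eval_add {R : Type*} [CommSemiring R] (a b : ℕ) (x : R) :
    (ascPochhammer R (a + b)).eval x =
      (ascPochhammer R a).eval x * (ascPochhammer R b).eval (x + a) := by
  simp [← ascPochhammer_mul, Polynomial.eval_comp]

variable {K : Type*} [Field K] [NeZero (2 : K)]

theorem ascPochhammer_eval_two_mul (d : ℕ) (x : K) :
    (ascPochhammer K d).eval (2 * x) =
      2 ^ d * (ascPochhammer K ((d + 1) / 2)).eval x *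
        (ascPochhammer K (d / 2)).eval (x + 1 / 2) := by
  induction d with
  | zero => simp
  | succ d ih =>
    rw [ascPochhammer_succ_eval, ih]
    obtain ⟨k, rfl | rfl⟩ := Nat.even_or_odd' d
    · rw [show (2 * k + 1) / 2 = k by omega, show (2 * k + 1 + 1) / 2 = k + 1 by omega,
        show 2 * k / 2 = k by omega, ascPochhammer_succ_eval]
      push_cast
      ring
    · rw [show (2 * k + 1) / 2 = k by omega, show (2 * k + 1 + 1) / 2 = k + 1 by omega,
        show (2 * k + 1 + 1 + 1) / 2 = k + 1 by omega, ascPochhammer_succ_eval k (x + 1 / 2)]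
      push_cast
      field_simp
      ring

theorem exists_eval_eq_ascPochhammer_div_mul {d q : ℕ} (hdq : d / 2 ≤ q) :
    ∃ P : Polynomial K, ∀ x : K, (ascPochhammer K d).eval (2 * x) ≠ 0 →
      (ascPochhammer K d).eval x / (ascPochhammer K d).eval (2 * x) *
        (ascPochhammer K q).eval (x + 1 / 2) = P.eval x := by
  obtain ⟨r, rfl⟩ := Nat.exists_eq_add_of_le hdq
  refine ⟨.C (2 ^ d : K)⁻¹ * (ascPochhammer K (d / 2)).comp (.X + .C (((d + 1) / 2 : ℕ) : K)) *
    (ascPochhammer K r).comp (.X + .C (1 / 2) + .C ((d / 2 : ℕ) : K)), fun x hx ↦ ?_⟩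
  have numerator_eq := ascPochhammer_eval_add ((d + 1) / 2) (d / 2) x
  rw [show (d + 1) / 2 + d / 2 = d by omega] at numerator_eq
  rw [ascPochhammer_eval_two_mul] at hx ⊢
  have upper_ne := right_ne_zero_of_mul (left_ne_zero_of_mul hx)
  have lower_ne := right_ne_zero_of_mul hx
  rw [numerator_eq, ascPochhammer_eval_add (d / 2) r (x + 1 / 2)]
  simp only [Polynomial.eval_mul, Polynomial.eval_C, Polynomial.eval_comp, Polynomial.eval_add,
    Polynomial.eval_X]
  -- `field_simp` would otherwise rewrite `x + 1 / 2` inside `eval` and lose track of `lower_ne`.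
  generalize (ascPochhammer K (d / 2)).eval (x + 1 / 2) = lower at *
  field_simp

end AscPochhammer

theorem coeff_X_mul_pderiv {σ R : Type*} [CommSemiring R] (i : σ) (φ : MvPolynomial σ R)
    (e : σ →₀ ℕ) : coeff e (X i * pderiv i φ) = e i * coeff e φ := by
  classical
  rw [coeff_X_mul', coeff_pderiv]
  split_ifs with hi
  · have one_le : 1 ≤ e i := Nat.one_le_iff_ne_zero.mpr (Finsupp.mem_support_iff.mp hi)
    have single_le : Finsupp.single i 1 ≤ e := Finsupp.single_le_iff.mpr one_le
    rw [tsub_add_cancel_of_le single_le, Finsupp.tsub_apply, Finsupp.single_eq_same, mul_comm]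
    norm_cast
    rw [Nat.sub_add_cancel one_le]
  · rw [Finsupp.notMem_support_iff.mp hi, Nat.cast_zero, zero_mul]

namespace LO

variable {n : ℕ}

/-! ### Functions of the Euler operator -/

theorem coeff_cE (c : ℕ → ℂ) (φ : PolA n) (e : (Fin n ⊕ Fin n) →₀ ℕ) :
    coeff e (cE c φ) = c (xiDeg e) * coeff e φ := by
  classical
  simp only [cE, coeff_sum, coeff_monomial, Finset.sum_ite_eq', mem_support_iff]
  split_ifs with h
  · rfl
  · rw [not_not.mp h, mul_zero]

/-- The functional calculus `c ↦ c(E)` of the Euler operator, as a homomorphism from the algebra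
of functions on `ℕ` with pointwise operations. -/
noncomputable def cEHom (n : ℕ) : (ℕ → ℂ) →ₐ[ℂ] Module.End ℂ (PolA n) where
  toFun c :=
    { toFun := cE c
      map_add' := fun φ ψ ↦ by ext; simp only [coeff_cE, coeff_add, mul_add]
      map_smul' := fun a φ ↦ by
        ext; simp only [coeff_cE, coeff_smul, smul_eq_mul, RingHom.id_apply, mul_left_comm] }
  map_one' := LinearMap.ext fun φ ↦ by ext; simp [coeff_cE]
  map_mul' c c' := LinearMap.ext fun φ ↦ by ext; simp [coeff_cE, mul_assoc]
  map_zero' := LinearMap.ext fun φ ↦ by ext; simp [coeff_cE]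
  map_add' c c' := LinearMap.ext fun φ ↦ by ext; simp [coeff_cE, add_mul]
  commutes' a := LinearMap.ext fun φ ↦ by ext; simp [coeff_cE, Module.algebraMap_end_apply]

theorem coe_cEHom (c : ℕ → ℂ) : ⇑(cEHom n c) = cE c := rfl

theorem cE_cE (c c' : ℕ → ℂ) (φ : PolA n) : cE c (cE c' φ) = cE (c * c') φ := by
  simp only [← coe_cEHom, map_mul, Module.End.mul_apply]

theorem Elin_eq_cEHom : Elin n = cEHom n (fun m ↦ (m : ℂ)) := by
  refine LinearMap.ext fun φ ↦ MvPolynomial.ext _ _ fun e ↦ ?_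
  simp [Elin, coe_cEHom, coeff_cE, coeff_sum, coeff_X_mul_pderiv, xiDeg, Finset.sum_mul]

theorem aeval_Elin (P : Polynomial ℂ) :
    Polynomial.aeval (Elin n) P = cEHom n (fun m ↦ P.eval (m : ℂ)) := by
  rw [Elin_eq_cEHom, Polynomial.aeval_algHom_apply, Polynomial.aeval_pi_apply]
  simp only [Polynomial.coe_aeval_eq_eval]

theorem cE_sum {ι : Type*} (c : ℕ → ℂ) (s : Finset ι) (f : ι → PolA n) :
    cE c (∑ i ∈ s, f i) = ∑ i ∈ s, cE c (f i) :=
  map_sum (cEHom n c) f s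

theorem cE_zero (c : ℕ → ℂ) : cE c (0 : PolA n) = 0 :=
  map_zero (cEHom n c)

theorem pderiv_inl_cE (c : ℕ → ℂ) (i : Fin n) (φ : PolA n) :
    pderiv (Sum.inl i) (cE c φ) = cE c (pderiv (Sum.inl i) φ) := by
  ext e
  have xiDeg_add : xiDeg (e + Finsupp.single (Sum.inl i) 1) = xiDeg e := by simp [xiDeg]
  rw [coeff_pderiv, coeff_cE, coeff_cE, coeff_pderiv, xiDeg_add, mul_assoc]

theorem pderiv_inr_cE (c : ℕ → ℂ) (i : Fin n) (φ : PolA n) :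
    pderiv (Sum.inr i) (cE c φ) = cE (fun m ↦ c (m + 1)) (pderiv (Sum.inr i) φ) := by
  ext e
  have xiDeg_add : xiDeg (e + Finsupp.single (Sum.inr i) 1) = xiDeg e + 1 := by
    simp [xiDeg, Finset.sum_add_distrib, Finsupp.single_apply]
  rw [coeff_pderiv, coeff_cE, coeff_cE, coeff_pderiv, xiDeg_add, mul_assoc]

theorem Dop_cE (c : ℕ → ℂ) (φ : PolA n) : Dop (cE c φ) = cE (fun m ↦ c (m + 1)) (Dop φ) := by
  simp only [Dop, pderiv_inr_cE, pderiv_inl_cE, cE_sum]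

theorem iterate_Dop_cE (d : ℕ) (c : ℕ → ℂ) (φ : PolA n) :
    Dop^[d] (cE c φ) = cE (fun m ↦ c (m + d)) (Dop^[d] φ) := by
  induction d generalizing c φ with
  | zero => rfl
  | succ d ih =>
    rw [Function.iterate_succ_apply, Function.iterate_succ_apply, Dop_cE, ih]
    simp only [add_assoc, add_comm d 1]

/-! ### Differential operators -/

theorem mulLeft_X_mem_Weyl (v : Fin n ⊕ Fin n) : LinearMap.mulLeft ℂ (X v) ∈ Weyl n := by
  apply Algebra.subset_adjoin
  rcases v with i | i
  · exact Or.inl (Or.inl ⟨i, rfl⟩)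
  · exact Or.inl (Or.inr ⟨i, rfl⟩)

theorem pderiv_mem_Weyl (v : Fin n ⊕ Fin n) : (pderiv v).toLinearMap ∈ Weyl n :=
  Algebra.subset_adjoin (Or.inr ⟨v, rfl⟩)

theorem Elin_mem_Weyl : Elin n ∈ Weyl n :=
  sum_mem fun _ _ ↦ mul_mem (mulLeft_X_mem_Weyl _) (pderiv_mem_Weyl _)

theorem Dlin_mem_Weyl : Dlin n ∈ Weyl n :=
  sum_mem fun _ _ ↦ mul_mem (pderiv_mem_Weyl _) (pderiv_mem_Weyl _)

theorem cEHom_eval_mem_Weyl (P : Polynomial ℂ) :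
    cEHom n (fun m ↦ P.eval (m : ℂ)) ∈ Weyl n := by
  rw [← aeval_Elin]
  exact Algebra.adjoin_le (Set.singleton_subset_iff.mpr Elin_mem_Weyl)
    (Polynomial.aeval_mem_adjoin_singleton ℂ (Elin n))

/-- `f` is a differential operator with polynomial coefficients, i.e. the underlying map of an
element of the Weyl algebra. -/
def IsDiffOp (f : PolA n → PolA n) : Prop :=
  ∃ P ∈ Weyl n, ⇑P = f

theorem IsDiffOp.comp {f g : PolA n → PolA n} (hf : IsDiffOp f) (hg : IsDiffOp g) :
    IsDiffOp (f ∘ g) := by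
  obtain ⟨P, hP, rfl⟩ := hf
  obtain ⟨Q, hQ, rfl⟩ := hg
  exact ⟨P * Q, mul_mem hP hQ, rfl⟩

theorem IsDiffOp.iterate {f : PolA n → PolA n} (hf : IsDiffOp f) (d : ℕ) : IsDiffOp f^[d] := by
  obtain ⟨P, hP, rfl⟩ := hf
  exact ⟨P ^ d, pow_mem hP d, Module.End.coe_pow P d⟩

theorem isDiffOp_Dop : IsDiffOp (Dop (n := n)) :=
  ⟨Dlin n, Dlin_mem_Weyl, funext fun φ ↦ by simp [Dlin, Dop]⟩

theorem isDiffOp_cE {c : ℕ → ℂ} {P : Polynomial ℂ} (hc : ∀ m : ℕ, c m = P.eval (m : ℂ)) :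
    IsDiffOp (cE (n := n) c) :=
  ⟨_, cEHom_eval_mem_Weyl P, by rw [coe_cEHom, ← funext hc]⟩

theorem isDiffOp_foldr_pderiv {ι : Type*} (v : ι → Fin n ⊕ Fin n) (l : List ι) :
    IsDiffOp (fun φ : PolA n ↦ l.foldr (fun i χ ↦ pderiv (v i) χ) φ) := by
  induction l with
  | nil => exact ⟨1, one_mem _, rfl⟩
  | cons i l ih => exact IsDiffOp.comp ⟨_, pderiv_mem_Weyl (v i), rfl⟩ ih

/-! ### Bidifferential operators -/

theorem bidiff_mul {f g : PolA n → PolA n} (hf : IsDiffOp f) (hg : IsDiffOp g) :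
    Bidiff n (fun φ ψ ↦ f φ * g ψ) := by
  obtain ⟨P, hP, rfl⟩ := hf
  obtain ⟨Q, hQ, rfl⟩ := hg
  exact ⟨1, fun _ ↦ ⟨P, hP⟩, fun _ ↦ ⟨Q, hQ⟩, by simp⟩

theorem bidiff_zero : Bidiff n (fun _ _ ↦ 0) :=
  ⟨0, Fin.elim0, Fin.elim0, by simp⟩

namespace Bidiff

variable {B B' : PolA n → PolA n → PolA n}

theorem add (h : Bidiff n B) (h' : Bidiff n B') : Bidiff n (fun φ ψ ↦ B φ ψ + B' φ ψ) := by
  obtain ⟨N, P, Q, h⟩ := h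
  obtain ⟨N', P', Q', h'⟩ := h'
  exact ⟨N + N', Fin.append P P', Fin.append Q Q', fun φ ψ ↦ by simp [h, h', Fin.sum_univ_add]⟩

theorem sum {ι : Type*} {s : Finset ι} {B : ι → PolA n → PolA n → PolA n}
    (h : ∀ i ∈ s, Bidiff n (B i)) : Bidiff n (fun φ ψ ↦ ∑ i ∈ s, B i φ ψ) := by
  classical
  induction s using Finset.induction_on with
  | empty => simpa using bidiff_zero
  | insert a s ha ih =>
    simp only [Finset.sum_insert ha]
    exact (h a (s.mem_insert_self a)).add (ih fun i hi ↦ h i (Finset.mem_insert_of_mem hi))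

theorem comp₂ {f g : PolA n → PolA n} (hB : Bidiff n B) (hf : IsDiffOp f) (hg : IsDiffOp g) :
    Bidiff n (fun φ ψ ↦ B (f φ) (g ψ)) := by
  obtain ⟨N, P, Q, hB⟩ := hB
  simp only [hB]
  exact sum fun α _ ↦
    bidiff_mul (.comp ⟨_, (P α).2, rfl⟩ hf) (.comp ⟨_, (Q α).2, rfl⟩ hg)

theorem smul (a : ℂ) (hB : Bidiff n B) : Bidiff n (fun φ ψ ↦ a • B φ ψ) := by
  obtain ⟨N, P, Q, hB⟩ := hB
  exact ⟨N, fun α ↦ a • P α, Q, fun φ ψ ↦ by simp [hB, Finset.smul_sum]⟩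

theorem X_mul (v : Fin n ⊕ Fin n) (hB : Bidiff n B) : Bidiff n (fun φ ψ ↦ X v * B φ ψ) := by
  obtain ⟨N, P, Q, hB⟩ := hB
  exact ⟨N, fun α ↦ ⟨_, mulLeft_X_mem_Weyl v⟩ * P α, Q,
    fun φ ψ ↦ by simp [hB, Finset.mul_sum, mul_assoc]⟩

theorem pderiv (v : Fin n ⊕ Fin n) (hB : Bidiff n B) :
    Bidiff n (fun φ ψ ↦ MvPolynomial.pderiv v (B φ ψ)) := by
  obtain ⟨N, P, Q, hB⟩ := hB
  simp only [hB, map_sum, pderiv_mul]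
  have hv : IsDiffOp (MvPolynomial.pderiv v : PolA n → PolA n) := ⟨_, pderiv_mem_Weyl v, rfl⟩
  refine sum fun α _ ↦ add ?_ ?_
  · exact bidiff_mul (hv.comp ⟨_, (P α).2, rfl⟩) ⟨_, (Q α).2, rfl⟩
  · exact bidiff_mul ⟨_, (P α).2, rfl⟩ (hv.comp ⟨_, (Q α).2, rfl⟩)

theorem comp_left {f : PolA n → PolA n} (hf : IsDiffOp f) (hB : Bidiff n B) :
    Bidiff n (fun φ ψ ↦ f (B φ ψ)) := by
  obtain ⟨P, hP, rfl⟩ := hf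
  induction hP using Algebra.adjoin_induction generalizing B with
  | mem P hP =>
    obtain (⟨i, rfl⟩ | ⟨i, rfl⟩) | ⟨v, rfl⟩ := hP
    · exact hB.X_mul (Sum.inl i)
    · exact hB.X_mul (Sum.inr i)
    · exact hB.pderiv v
  | algebraMap a => exact hB.smul a
  | add P Q _ _ ihP ihQ => exact (ihP hB).add (ihQ hB)
  | mul _ Q _ _ ihP ihQ => exact ihP (ihQ hB)

end Bidiff

theorem bidiff_Nop (k : ℕ) : Bidiff n (Nop k) :=
  (Bidiff.sum fun _ _ ↦
    bidiff_mul (isDiffOp_foldr_pderiv Sum.inr _) (isDiffOp_foldr_pderiv Sum.inl _)).smul _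

/-! ### The scalars at `λ = 1/2` -/

theorem TScal_eq_ascPochhammer (n p m : ℕ) :
    TScal n p m = (ascPochhammer ℂ (p / 2)).eval ((m : ℂ) + (n + 1) / 2 + 1 / 2) := by
  rw [TScal, ascPochhammer_eval_eq_prod_range, ← Finset.Ico_add_one_right_eq_Icc,
    Finset.prod_Ico_eq_prod_range, Nat.add_sub_cancel]
  refine Finset.prod_congr rfl fun j _ ↦ ?_
  push_cast
  ring

theorem SScal_eq_ascPochhammer (n p m : ℕ) :
    SScal n p m =
      (-1) ^ (p / 2) * (ascPochhammer ℂ (p / 2)).eval (1 / 2 - ((m : ℂ) + n / 2) + 1 / 2) := by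
  rw [SScal, ascPochhammer_eval_eq_prod_range, ← Finset.Ico_add_one_right_eq_Icc,
    Finset.prod_Ico_eq_prod_range, Nat.add_sub_cancel]
  have factor_eq (j : ℕ) :
      (m : ℂ) + n / 2 - (1 + j : ℕ) = -(1 / 2 - ((m : ℂ) + n / 2) + 1 / 2 + j) := by
    push_cast
    ring
  simp only [factor_eq, Finset.prod_neg, Finset.card_range]

theorem gScal_half_eq_ascPochhammer_div (n d m : ℕ) :
    gScal n (1 / 2) d m = (-1) ^ d * (d.factorial : ℂ)⁻¹ *
      ((ascPochhammer ℂ d).eval ((m : ℂ) + (n + 1) / 2) /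
        (ascPochhammer ℂ d).eval (2 * ((m : ℂ) + (n + 1) / 2))) := by
  rw [gScal, ascPochhammer_eval_eq_prod_range, ascPochhammer_eval_eq_prod_range,
    ← Finset.prod_div_distrib, mul_comm ((-1) ^ d), mul_assoc]
  have factor_eq (j : ℕ) :
      (-(m : ℂ) - j - 1 / 2 * (n + 1)) / (2 * m + j + n + 1) =
        -(((m : ℂ) + (n + 1) / 2 + j) / (2 * ((m : ℂ) + (n + 1) / 2) + j)) := by
    rw [← neg_div]
    congr 1 <;> ring
  simp only [factor_eq, Finset.prod_neg, Finset.card_range]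

theorem hScal_half_eq_ascPochhammer_div (n d m : ℕ) :
    hScal n (1 / 2) d m = (d.factorial : ℂ)⁻¹ *
      ((ascPochhammer ℂ d).eval (1 / 2 - (((m + d : ℕ) : ℂ) + n / 2)) /
        (ascPochhammer ℂ d).eval (2 * (1 / 2 - (((m + d : ℕ) : ℂ) + n / 2)))) := by
  rw [hScal, ascPochhammer_eval_eq_prod_range, ascPochhammer_eval_eq_prod_range,
    ← Finset.prod_div_distrib, ← Finset.prod_range_reflect]
  congr 1
  refine Finset.prod_congr rfl fun j hj ↦ ?_
  have d_eq : (d : ℂ) = (d - 1 - j : ℕ) + j + 1 := by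
    have := Finset.mem_range.mp hj
    exact_mod_cast (by omega : d = d - 1 - j + j + 1)
  rw [← neg_div_neg_eq, Nat.cast_add]
  congr 1
  · linear_combination d_eq
  · linear_combination d_eq

theorem exists_eval_eq_TScal_mul_gScal (n : ℕ) {p d : ℕ} (hdp : d ≤ p) :
    ∃ P : Polynomial ℂ, ∀ m : ℕ, (TScal n p * gScal n (1 / 2) d) m = P.eval (m : ℂ) := by
  obtain ⟨P, hP⟩ :=
    exists_eval_eq_ascPochhammer_div_mul (K := ℂ) (Nat.div_le_div_right (c := 2) hdp)
  refine ⟨.C ((-1) ^ d * (d.factorial : ℂ)⁻¹) * P.comp (.X + .C (((n : ℂ) + 1) / 2)), fun m ↦ ?_⟩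
  have denominator_ne : (ascPochhammer ℂ d).eval (2 * ((m : ℂ) + (n + 1) / 2)) ≠ 0 := by
    rw [Ne, ascPochhammer_eval_eq_zero_iff]
    rintro ⟨k, -, hk⟩
    have : ((k + 2 * m + n + 1 : ℕ) : ℂ) = 0 := by push_cast; linear_combination hk
    exact absurd (Nat.cast_eq_zero.mp this) (by omega)
  rw [Pi.mul_apply, TScal_eq_ascPochhammer, gScal_half_eq_ascPochhammer_div]
  simp only [Polynomial.eval_mul, Polynomial.eval_C, Polynomial.eval_comp, Polynomial.eval_add,
    Polynomial.eval_X, ← hP _ denominator_ne]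
  ring

theorem exists_eval_eq_hScal_mul_SScal (n : ℕ) {p d : ℕ} (hdp : d ≤ p) :
    ∃ P : Polynomial ℂ, ∀ m : ℕ,
      (hScal n (1 / 2) d * fun k ↦ SScal n p (k + d)) m = P.eval (m : ℂ) := by
  obtain ⟨P, hP⟩ :=
    exists_eval_eq_ascPochhammer_div_mul (K := ℂ) (Nat.div_le_div_right (c := 2) hdp)
  refine ⟨.C ((-1) ^ (p / 2) * (d.factorial : ℂ)⁻¹) *
    P.comp (.C (1 / 2) - (.X + .C (d : ℂ) + .C ((n : ℂ) / 2))), fun m ↦ ?_⟩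
  have denominator_ne :
      (ascPochhammer ℂ d).eval (2 * (1 / 2 - (((m + d : ℕ) : ℂ) + n / 2))) ≠ 0 := by
    rw [Ne, ascPochhammer_eval_eq_zero_iff]
    rintro ⟨k, hkd, hk⟩
    have : ((k + 1 : ℕ) : ℂ) = (2 * (m + d) + n : ℕ) := by
      push_cast at hk ⊢
      linear_combination hk
    have := Nat.cast_injective this
    omega
  rw [Pi.mul_apply, SScal_eq_ascPochhammer, hScal_half_eq_ascPochhammer_div]
  simp only [Polynomial.eval_mul, Polynomial.eval_C, Polynomial.eval_comp, Polynomial.eval_add,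
    Polynomial.eval_sub, Polynomial.eval_X, ← Nat.cast_add, ← hP _ denominator_ne]
  ring

theorem isDiffOp_Tp_comp_bg {p d : ℕ} (hdp : d ≤ p) :
    IsDiffOp (Tp n p ∘ bg (1 / 2) d) := by
  obtain ⟨P, hP⟩ := exists_eval_eq_TScal_mul_gScal n hdp
  have eq_comp : Tp n p ∘ bg (1 / 2) d = cE (TScal n p * gScal n (1 / 2) d) ∘ Dop^[d] :=
    funext fun φ ↦ cE_cE _ _ _
  rw [eq_comp]
  exact (isDiffOp_cE hP).comp (isDiffOp_Dop.iterate d)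

theorem isDiffOp_bh_comp_Sp {p d : ℕ} (hdp : d ≤ p) :
    IsDiffOp (bh (1 / 2) d ∘ Sp n p) := by
  obtain ⟨P, hP⟩ := exists_eval_eq_hScal_mul_SScal n hdp
  have eq_comp : bh (1 / 2) d ∘ Sp n p =
      cE (hScal n (1 / 2) d * fun k ↦ SScal n p (k + d)) ∘ Dop^[d] :=
    funext fun φ ↦ by simp only [Function.comp_apply, bh, Sp, iterate_Dop_cE, cE_cE]
  rw [eq_comp]
  exact (isDiffOp_cE hP).comp (isDiffOp_Dop.iterate d)

theorem bidiff_Tp_bg_Nop_bh_Sp {p i j m : ℕ} (hi : i ≤ p) (hj : j ≤ p) (hm : m ≤ p) (k : ℕ) :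
    Bidiff n fun φ ψ ↦
      Tp n p (bg (1 / 2) m (Nop k (bh (1 / 2) i (Sp n p φ)) (bh (1 / 2) j (Sp n p ψ)))) := by
  have bidiff_Nop_bh := (bidiff_Nop k).comp₂
    (isDiffOp_bh_comp_Sp (n := n) hi) (isDiffOp_bh_comp_Sp hj)
  have bidiff_Tp_bg_Nop := bidiff_Nop_bh.comp_left (isDiffOp_Tp_comp_bg hm)
  exact bidiff_Tp_bg_Nop

end LO

theorem stmt_12_general (n p : ℕ) :
    LO.Bidiff n
      (fun φ ψ => LO.Tp n p (LO.C n (1 / 2) p (LO.Sp n p φ) (LO.Sp n p ψ))) := by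
  have Tp_sum {ι : Type} (s : Finset ι) (f : ι → PolA n) :
      LO.Tp n p (∑ i ∈ s, f i) = ∑ i ∈ s, LO.Tp n p (f i) := LO.cE_sum _ s f
  have Tp_zero : LO.Tp n p 0 = 0 := LO.cE_zero _
  simp only [LO.C, Tp_sum]
  refine .sum fun i _ ↦ .sum fun j _ ↦ .sum fun k _ ↦ .sum fun m _ ↦ ?_
  split_ifs with h_sum
  · exact LO.bidiff_Tp_bg_Nop_bh_Sp (by omega) (by omega) (by omega) k
  · simpa only [Tp_zero] using LO.bidiff_zero

/-- Theorem 5, existence: for `n` odd and `p ≥ 1`, the bilinear map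
`Z_p(φ,ψ) = T_p(C^{1/2}_p(S_p φ, S_p ψ))` is bidifferential. -/
theorem stmt_12 (n : ℕ) (hn : Odd n) (p : ℕ) (hp : 1 ≤ p) :
    LO.Bidiff n
      (fun φ ψ => LO.Tp n p (LO.C n (1 / 2) p (LO.Sp n p φ) (LO.Sp n p ψ))) :=
  stmt_12_general n p
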